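/- Let π ∈ S_N and 1 ≤ i ≤ N−1 with ℓ(s_i π) > ℓ(π). Then ⟨s_iπ| B_{N−1}(σ_1) ⋯ B_i(σ_{N−i}) B_{i−1}(σ_{N−i+1}) = ∂^β_{N−i} ( ⟨π| B_{N−1}(σ_1) ⋯ B_i(σ_{N−i}) B_{i−1}(σ_{N−i+1}) ), where both sides are covectors whose components are rational functions of σ_1,…,σ_{N−i+1}, the product runs over consecutive descending indices N−1, N−2, …, i−1, and ∂^β_{N−i} is the β-divided difference operator in the variables σ_{N−i}, σ_{N−i+1} applied componentwise. -/

import Mathlib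

noncomputable section
open scoped BigOperators

variable {F : Type*}

/-- `x ⊖ y := (x - y)/(1 + β·y)`. -/
def om [Field F] (β x y : F) : F := (x - y) / (1 + β * y)

/-- `⊖ t := -t/(1 + β·t)`. -/
def negOm [Field F] (β t : F) : F := (-t) / (1 + β * t)

/-- The R-matrix `R^{(n)}(x,y)` on `V ⊗ V`, `V = F^n`, with entries
`R_{ij,kl} = (1 + [k<l]·β(x⊖y)) δ_{il} δ_{jk} + [k>l]·(x⊖y) δ_{ik} δ_{jl}`;
the row index is the pair `(i,j)`, the column index is the pair `(k,l)`. -/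
def Rmat [Field F] (n : ℕ) (β x y : F) :
    Matrix (Fin n × Fin n) (Fin n × Fin n) F := Matrix.of fun p q =>
  (if p.1 = q.2 ∧ p.2 = q.1 then (if q.1 < q.2 then 1 + β * om β x y else 1) else 0) +
  (if p.1 = q.1 ∧ p.2 = q.2 ∧ q.2 < q.1 then om β x y else 0)

/-- `R_{a i}(u, τ)` : the R-matrix acting on the auxiliary space (first factor)
and the `i`-th site of `H = (F^n)^{⊗N}`, identity elsewhere. -/
def Rsite [Field F] (n N : ℕ) (β u τ : F) (i : Fin N) :
    Matrix (Fin n × (Fin N → Fin n)) (Fin n × (Fin N → Fin n)) F := Matrix.of fun p q =>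
  Rmat n β u τ (p.1, p.2 i) (q.1, q.2 i) *
    (if ∀ j, j ≠ i → p.2 j = q.2 j then 1 else 0)

/-- The monodromy matrix `T_a(u) = R_{aN}(u,t_N) ⋯ R_{a1}(u,t_1)` on `V_a ⊗ H`. -/
def Tmono [Field F] (n N : ℕ) (β u : F) (t : Fin N → F) :
    Matrix (Fin n × (Fin N → Fin n)) (Fin n × (Fin N → Fin n)) F :=
  ((List.ofFn fun i : Fin N => Rsite n N β u (t i) i).reverse).prod

/-- The block `T_a(u)_{r c}` (with respect to the auxiliary space) as an operator on `H`. -/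
def blockOp [Field F] (n N : ℕ) (β u : F) (t : Fin N → F) (r c : Fin n) :
    Matrix (Fin N → Fin n) (Fin N → Fin n) F :=
  Matrix.of fun s s' => Tmono n N β u t (r, s) (c, s')

/-- The natural basis vector `|n_1,…,n_N⟩` of `H` (also used as a dual basis covector). -/
def ket [Field F] (n N : ℕ) (g : Fin N → Fin n) : (Fin N → Fin n) → F :=
  fun s => if s = g then 1 else 0

/-- The Coxeter length of a permutation: its number of inversions. -/
def permLength {N : ℕ} (w : Equiv.Perm (Fin N)) : ℕ :=
  (Finset.univ.filter fun p : Fin N × Fin N => p.1 < p.2 ∧ w p.2 < w p.1).card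

/-- The longest permutation `ω_N : i ↦ N - 1 - i`. -/
def omegaPerm (N : ℕ) : Equiv.Perm (Fin N) :=
  ⟨Fin.rev, Fin.rev, fun i => Fin.rev_rev i, fun i => Fin.rev_rev i⟩

/-- The product `B_{N-1}(σ_1) B_{N-2}(σ_2) ⋯` of `c` consecutive descending
B-operators (`n = N = M+2`). -/
def topString [Field F] (M : ℕ) (β : F) (t : Fin (M + 2) → F) (σ : Fin (M + 2) → F)
    (c : ℕ) (hc : c ≤ M + 1) :
    Matrix (Fin (M + 2) → Fin (M + 2)) (Fin (M + 2) → Fin (M + 2)) F :=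
  (List.ofFn fun a : Fin c =>
      blockOp (M + 2) (M + 2) β (σ ⟨a, by have := a.isLt; omega⟩) t 0
        ⟨M + 1 - (a : ℕ), by omega⟩).prod

/-- The full descending product
`B_{N-1}(σ_1) ⋯ B_{i+1}(σ_{N-i-1}) B_i(σ_{N-i}) B_{i-1}(σ_{N-i+1})`
as a function of the parameters `σ`. -/
def fullDesc [Field F] (M : ℕ) (β : F) (t : Fin (M + 2) → F) (ii : Fin (M + 1))
    (σ : Fin (M + 2) → F) :
    Matrix (Fin (M + 2) → Fin (M + 2)) (Fin (M + 2) → Fin (M + 2)) F :=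
  topString M β t σ (M - (ii : ℕ)) (by omega) *
    blockOp (M + 2) (M + 2) β (σ ⟨M - (ii : ℕ), by omega⟩) t 0 ii.succ *
    blockOp (M + 2) (M + 2) β (σ ⟨M + 1 - (ii : ℕ), by omega⟩) t 0 ii.castSucc

open scoped Matrix Kronecker

/-!
By the Yang–Baxter equation there is an operator on two neighbouring sites `j, j'` that intertwines
the `B`-operators with inhomogeneities `t` and those with `t_j`, `t_{j'}` exchanged. Applied to
`⟨w|` with `w_j < w_{j'}` it expresses `⟨w s_j|`, up to the factor `t_{j'} ⊖ t_j`, through `⟨w|` at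
the two choices of inhomogeneities, so the divided-difference relation between `⟨s_i w|` and `⟨w|`
passes on to `⟨s_i w s_j|` and `⟨w s_j|`. Every `π` with `i - 1` placed to the left of `i` arises in
this way from the identity. There all `B`-operators act by moving a single basis covector to a
multiple of another one, and the relation reduces to
`u - v = (1 + β v) (u ⊖ τ) - (1 + β u) (v ⊖ τ)`.
-/

section Weights

variable [Field F]

/-- The amplitude with which the `R`-matrix lets the auxiliary colour `a` pass a site of colour `b`
without exchanging the two; the amplitude of the exchange is `1 + β * passWeight o a b`. -/
def passWeight {n : ℕ} (o : F) (a b : Fin n) : F := if b < a then o else 0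

/-- `x ⊖ z = (x ⊖ y) ⊕ (y ⊖ z)` for the formal group law `a ⊕ b = a + b + β a b`. -/
lemma om_eq_om_add_om {β y z : F} (x : F) (hy : 1 + β * y ≠ 0) (hz : 1 + β * z ≠ 0) :
    om β x z = om β x y + om β y z + β * (om β x y * om β y z) := by
  grind [om]

lemma om_ne_zero {β x y : F} (hxy : x ≠ y) (hy : 1 + β * y ≠ 0) : om β x y ≠ 0 :=
  div_ne_zero (sub_ne_zero.2 hxy) hy

end Weights

section SiteOperators

variable [Field F] {n N : ℕ}

/-- The basis covector `⟨p|` of the free module on `ι`. -/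
abbrev bra {ι : Type*} [DecidableEq ι] (p : ι) : ι → F := Pi.single p 1

lemma ket_eq_bra (g : Fin N → Fin n) : ket n N g = bra (F := F) g := by
  funext s
  simp [ket, Pi.single_apply]

lemma bra_vecMul_Rsite (β u τ : F) (i : Fin N) (a : Fin n) (s : Fin N → Fin n) :
    bra (a, s) ᵥ* Rsite n N β u τ i =
      (1 + β * passWeight (om β u τ) a (s i)) • bra (s i, Function.update s i a) +
        passWeight (om β u τ) a (s i) • bra (F := F) (a, s) := by
  rw [bra, Matrix.single_one_vecMul]
  funext ⟨c, s'⟩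
  have exchanged : s' = Function.update s i a ↔ s' i = a ∧ ∀ j ≠ i, s j = s' j := by
    simp only [Function.eq_update_iff, eq_comm]
  have unchanged : s' = s ↔ s' i = s i ∧ ∀ j ≠ i, s j = s' j := by
    conv_lhs => rw [← Function.update_eq_self i s, Function.eq_update_iff]
    simp only [eq_comm]
  simp only [Matrix.row, Rsite, Rmat, Matrix.of_apply, Pi.add_apply, Pi.smul_apply,
    Pi.single_apply, smul_eq_mul, Prod.mk.injEq, passWeight, exchanged, unchanged]
  grind

lemma bra_vecMul_Rsite_of_le (β u τ : F) {i : Fin N} {a : Fin n} {s : Fin N → Fin n}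
    (h : a ≤ s i) :
    bra (a, s) ᵥ* Rsite n N β u τ i = bra (F := F) (s i, Function.update s i a) := by
  rw [bra_vecMul_Rsite]
  simp [passWeight, h.not_gt]

/-- The operator on `H` exchanging the spectral parameters of the sites `j` and `j'`: the `R`-matrix
of these two sites followed by their transposition. -/
def siteExchange (β o : F) (j j' : Fin N) : Matrix (Fin N → Fin n) (Fin N → Fin n) F :=
  Matrix.of fun s =>
    (1 + β * passWeight o (s j') (s j)) • bra s +
      passWeight o (s j') (s j) • bra (s ∘ Equiv.swap j j')

lemma bra_vecMul_siteExchange (β o : F) (j j' : Fin N) (s : Fin N → Fin n) :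
    bra s ᵥ* siteExchange β o j j' =
      (1 + β * passWeight o (s j') (s j)) • bra s +
        passWeight o (s j') (s j) • bra (F := F) (s ∘ Equiv.swap j j') :=
  Matrix.single_one_vecMul _ _

lemma bra_vecMul_one_kronecker_siteExchange (β o : F) (j j' : Fin N) (a : Fin n)
    (s : Fin N → Fin n) :
    bra (a, s) ᵥ* ((1 : Matrix (Fin n) (Fin n) F) ⊗ₖ siteExchange β o j j') =
      (1 + β * passWeight o (s j') (s j)) • bra (a, s) +
        passWeight o (s j') (s j) • bra (F := F) (a, s ∘ Equiv.swap j j') := by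
  rw [bra, Matrix.single_one_vecMul]
  funext ⟨c, s'⟩
  by_cases h : a = c <;>
    simp [siteExchange, Matrix.row, Pi.single_apply, h, eq_comm (a := c)]

lemma commute_siteExchange_Rsite (β o u τ : F) {i j j' : Fin N} (hj : i ≠ j) (hj' : i ≠ j') :
    Commute ((1 : Matrix (Fin n) (Fin n) F) ⊗ₖ siteExchange β o j j') (Rsite n N β u τ i) := by
  refine Matrix.ext_of_single_vecMul fun ⟨a, s⟩ => ?_
  have swap_i : Equiv.swap j j' i = i := Equiv.swap_apply_of_ne_of_ne hj hj'
  simp only [← Matrix.vecMul_vecMul, bra_vecMul_Rsite, bra_vecMul_one_kronecker_siteExchange,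
    Matrix.add_vecMul, Matrix.smul_vecMul, Function.update_comp_equiv, Equiv.symm_swap,
    Function.comp_apply, swap_i, Function.update_of_ne hj.symm, Function.update_of_ne hj'.symm]
  module

section TwoSites

variable (β u τ o : F) {j j' : Fin N} (s : Fin N → Fin n) (a b c : Fin n)

lemma bra_update_update_vecMul_Rsite_left (hne : j ≠ j') :
    bra (a, Function.update (Function.update s j b) j' c) ᵥ* Rsite n N β u τ j =
      (1 + β * passWeight (om β u τ) a b) •
          bra (b, Function.update (Function.update s j a) j' c) +
        passWeight (om β u τ) a b •
          bra (F := F) (a, Function.update (Function.update s j b) j' c) := by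
  rw [bra_vecMul_Rsite, Function.update_of_ne hne, Function.update_self,
    Function.update_comm hne.symm, Function.update_idem]

lemma bra_update_update_vecMul_Rsite_right :
    bra (a, Function.update (Function.update s j b) j' c) ᵥ* Rsite n N β u τ j' =
      (1 + β * passWeight (om β u τ) a c) •
          bra (c, Function.update (Function.update s j b) j' a) +
        passWeight (om β u τ) a c •
          bra (F := F) (a, Function.update (Function.update s j b) j' c) := by
  rw [bra_vecMul_Rsite, Function.update_self, Function.update_idem]

lemma bra_update_update_vecMul_siteExchange (hne : j ≠ j') :
    bra (a, Function.update (Function.update s j b) j' c) ᵥ*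
        ((1 : Matrix (Fin n) (Fin n) F) ⊗ₖ siteExchange β o j j') =
      (1 + β * passWeight o c b) • bra (a, Function.update (Function.update s j b) j' c) +
        passWeight o c b •
          bra (F := F) (a, Function.update (Function.update s j c) j' b) := by
  have swapped : Function.update (Function.update s j b) j' c ∘ Equiv.swap j j' =
      Function.update (Function.update s j c) j' b := by
    funext k
    grind
  rw [bra_vecMul_one_kronecker_siteExchange, Function.update_self, Function.update_of_ne hne,
    Function.update_self, swapped]

end TwoSites

/-- The Yang–Baxter equation, the third `R`-matrix acting between the sites `j` and `j'`. -/
theorem semiconjBy_siteExchange_Rsite_mul_Rsite {β x y : F} (u : F) (hx : 1 + β * x ≠ 0)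
    (hy : 1 + β * y ≠ 0) {j j' : Fin N} (hne : j ≠ j') :
    SemiconjBy ((1 : Matrix (Fin n) (Fin n) F) ⊗ₖ siteExchange β (om β y x) j j')
      (Rsite n N β u x j' * Rsite n N β u y j) (Rsite n N β u y j' * Rsite n N β u x j) := by
  refine Matrix.ext_of_single_vecMul fun ⟨a, s⟩ => ?_
  obtain ⟨b, c, hs⟩ : ∃ b c, s = Function.update (Function.update s j b) j' c :=
    ⟨s j, s j', by simp⟩
  rw [hs]
  simp only [← Matrix.vecMul_vecMul, bra_update_update_vecMul_Rsite_left _ _ _ _ _ _ _ hne,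
    bra_update_update_vecMul_Rsite_right, bra_update_update_vecMul_siteExchange _ _ _ _ _ _ hne,
    Matrix.add_vecMul, Matrix.smul_vecMul, om_eq_om_add_om u hy hx]
  generalize om β u y = p
  generalize om β y x = q
  rcases lt_trichotomy a b with hab | hab | hab <;>
    rcases lt_trichotomy a c with hac | hac | hac <;>
    rcases lt_trichotomy b c with hbc | hbc | hbc <;>
    first
    | order
    | (clear hs
       subst_vars
       simp only [passWeight, LT.lt.not_gt, lt_irrefl, if_true, if_false, *] <;> module)

end SiteOperators

section Monodromy

variable [Field F] {n N : ℕ}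

lemma semiconjBy_list_map_prod {A ι : Type*} [Monoid A] {a : A} {f g : ι → A} (l : List ι)
    (h : ∀ i ∈ l, SemiconjBy a (f i) (g i)) :
    SemiconjBy a (l.map f).prod (l.map g).prod := by
  induction l with
  | nil => exact SemiconjBy.one_right a
  | cons i l ih =>
    simp only [List.map_cons, List.prod_cons]
    exact (h i List.mem_cons_self).mul_right (ih fun k hk => h k (List.mem_cons_of_mem i hk))

lemma finRange_eq_filter_append_cons (p : Fin N) :
    List.finRange N =
      (List.finRange N).filter (· < p) ++ p :: (List.finRange N).filter (p < ·) := by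
  refine (List.sortedLT_finRange N).eq_of_mem_iff ?_ fun k => ?_
  · have sorted := (List.sortedLT_finRange N).pairwise
    refine List.Pairwise.sortedLT (List.pairwise_append.2 ⟨sorted.filter _, ?_, ?_⟩)
    · exact List.pairwise_cons.2 ⟨by simp, sorted.filter _⟩
    · grind
  · simpa using (lt_trichotomy k p)

lemma filter_lt_finRange_of_covBy {j j' : Fin N} (h : j ⋖ j') :
    (List.finRange N).filter (j < ·) = j' :: (List.finRange N).filter (j' < ·) := by
  have sorted := (List.sortedLT_finRange N).pairwise
  refine (sorted.filter _).sortedLT.eq_of_mem_iff ?_ fun k => ?_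
  · exact (List.pairwise_cons.2 ⟨by simp, sorted.filter _⟩).sortedLT
  · simpa [eq_comm, ← le_iff_eq_or_lt] using h.lt_iff_le_right

/-- The product of the operators `R_{a i}(u, t_i)` along a list of sites; the monodromy matrix is
the case of all sites in descending order. -/
def siteProd (β u : F) (t : Fin N → F) (l : List (Fin N)) :
    Matrix (Fin n × (Fin N → Fin n)) (Fin n × (Fin N → Fin n)) F :=
  (l.map fun i => Rsite n N β u (t i) i).prod

lemma siteProd_cons (β u : F) (t : Fin N → F) (i : Fin N) (l : List (Fin N)) :
    siteProd (n := n) β u t (i :: l) = Rsite n N β u (t i) i * siteProd β u t l := by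
  simp [siteProd]

lemma siteProd_reverse_cons (β u : F) (t : Fin N → F) (i : Fin N) (l : List (Fin N)) :
    siteProd (n := n) β u t (i :: l).reverse =
      siteProd β u t l.reverse * Rsite n N β u (t i) i := by
  simp [siteProd]

lemma Tmono_eq_siteProd_mul_Rsite_mul_siteProd (β u : F) (t : Fin N → F) (p : Fin N) :
    Tmono n N β u t =
      siteProd β u t ((List.finRange N).filter (p < ·)).reverse * Rsite n N β u (t p) p *
        siteProd β u t ((List.finRange N).filter (· < p)).reverse := by
  conv_lhs =>
    rw [Tmono, List.ofFn_eq_map, ← List.map_reverse, finRange_eq_filter_append_cons p]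
  simp [siteProd, mul_assoc]

lemma semiconjBy_siteExchange_siteProd (β o u : F) (t : Fin N → F) {j j' : Fin N}
    {l : List (Fin N)} (hj : j ∉ l) (hj' : j' ∉ l) :
    SemiconjBy ((1 : Matrix (Fin n) (Fin n) F) ⊗ₖ siteExchange β o j j')
      (siteProd β u (t ∘ Equiv.swap j j') l) (siteProd β u t l) := by
  refine semiconjBy_list_map_prod l fun i hi => ?_
  have hij : i ≠ j := ne_of_mem_of_not_mem hi hj
  have hij' : i ≠ j' := ne_of_mem_of_not_mem hi hj'
  rw [Function.comp_apply, Equiv.swap_apply_of_ne_of_ne hij hij']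
  exact commute_siteExchange_Rsite β o u (t i) hij hij'

theorem semiconjBy_siteExchange_Tmono {β : F} (u : F) {t : Fin N → F}
    (ht : ∀ k, 1 + β * t k ≠ 0) {j j' : Fin N} (hjj' : j ⋖ j') :
    SemiconjBy ((1 : Matrix (Fin n) (Fin n) F) ⊗ₖ siteExchange β (om β (t j') (t j)) j j')
      (Tmono n N β u (t ∘ Equiv.swap j j')) (Tmono n N β u t) := by
  have away (l : List (Fin N)) (hj : j ∉ l) (hj' : j' ∉ l) :=
    semiconjBy_siteExchange_siteProd (n := n) β (om β (t j') (t j)) u t hj hj'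
  have crossing := semiconjBy_siteExchange_Rsite_mul_Rsite (n := n) u (ht j) (ht j') hjj'.ne
  simp only [Tmono_eq_siteProd_mul_Rsite_mul_siteProd (p := j), filter_lt_finRange_of_covBy hjj',
    siteProd_reverse_cons, Function.comp_apply, Equiv.swap_apply_left, Equiv.swap_apply_right,
    mul_assoc (siteProd _ _ _ _) (Rsite _ _ _ _ _ j')]
  refine ((away _ ?_ ?_).mul_right crossing).mul_right (away _ ?_ ?_) <;>
    simp [hjj'.le]

lemma submatrix_one_kronecker_mul {R α ι : Type*} [CommSemiring R] [Fintype α] [DecidableEq α]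
    [Fintype ι] (S : Matrix ι ι R) (T : Matrix (α × ι) (α × ι) R) (r c : α) :
    (((1 : Matrix α α R) ⊗ₖ S) * T).submatrix (Prod.mk r) (Prod.mk c) =
      S * T.submatrix (Prod.mk r) (Prod.mk c) := by
  ext s s'
  simp [Matrix.mul_apply, Fintype.sum_prod_type, Matrix.one_apply]

lemma submatrix_mul_one_kronecker {R α ι : Type*} [CommSemiring R] [Fintype α] [DecidableEq α]
    [Fintype ι] (S : Matrix ι ι R) (T : Matrix (α × ι) (α × ι) R) (r c : α) :
    (T * ((1 : Matrix α α R) ⊗ₖ S)).submatrix (Prod.mk r) (Prod.mk c) =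
      T.submatrix (Prod.mk r) (Prod.mk c) * S := by
  ext s s'
  simp [Matrix.mul_apply, Fintype.sum_prod_type, Matrix.one_apply]

theorem semiconjBy_siteExchange_blockOp {β : F} (u : F) {t : Fin N → F}
    (ht : ∀ k, 1 + β * t k ≠ 0) {j j' : Fin N} (hjj' : j ⋖ j') (r c : Fin n) :
    SemiconjBy (siteExchange β (om β (t j') (t j)) j j')
      (blockOp n N β u (t ∘ Equiv.swap j j') r c) (blockOp n N β u t r c) := by
  have blocks := congrArg (Matrix.submatrix · (Prod.mk r) (Prod.mk c))
    (semiconjBy_siteExchange_Tmono (n := n) u ht hjj').eq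
  simp only [submatrix_one_kronecker_mul, submatrix_mul_one_kronecker] at blocks
  exact blocks

end Monodromy

section SingleBlock

variable [Field F] {n N : ℕ}

lemma bra_vecMul_blockOp_apply (β u : F) (t : Fin N → F) (r c : Fin n) (s s' : Fin N → Fin n) :
    (bra s ᵥ* blockOp n N β u t r c) s' = (bra (r, s) ᵥ* Tmono n N β u t) (c, s') := by
  simp [blockOp, bra]

lemma bra_vecMul_siteProd_apply_eq_zero (β u : F) (t : Fin N → F) {c : Fin n}
    (s' : Fin N → Fin n) (l : List (Fin N)) {a : Fin n} {s : Fin N → Fin n} (ha : a ≠ c)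
    (hs : ∀ k ∈ l, s k ≠ c) : (bra (a, s) ᵥ* siteProd β u t l) (c, s') = 0 := by
  induction l generalizing a s with
  | nil => simp [siteProd, ha.symm]
  | cons i l ih =>
    have exchanged : ∀ k ∈ l, Function.update s i a k ≠ c := fun k hk => by
      rcases eq_or_ne k i with rfl | hki
      · simpa using ha
      · simpa [hki] using hs k (List.mem_cons_of_mem i hk)
    rw [siteProd_cons, ← Matrix.vecMul_vecMul, bra_vecMul_Rsite, Matrix.add_vecMul,
      Matrix.smul_vecMul, Matrix.smul_vecMul, Pi.add_apply, Pi.smul_apply, Pi.smul_apply,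
      ih ha fun k hk => hs k (List.mem_cons_of_mem i hk),
      ih (hs i List.mem_cons_self) exchanged, smul_zero, smul_zero, add_zero]

lemma bra_vecMul_siteProd_apply_of_lt (β u : F) (t : Fin N → F) {c : Fin n}
    (s s' : Fin N → Fin n) {l : List (Fin N)} (hl : l.Nodup) (hs : ∀ k ∈ l, s k < c) :
    (bra (c, s) ᵥ* siteProd β u t l) (c, s') = (l.map fun k => om β u (t k)).prod * bra s s' := by
  induction l with
  | nil => simp [siteProd, Pi.single_apply]
  | cons i l ih =>
    obtain ⟨hil, hl⟩ := List.nodup_cons.1 hl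
    obtain ⟨hi, hs⟩ := List.forall_mem_cons.1 hs
    have exchanged : ∀ k ∈ l, Function.update s i c k ≠ c := fun k hk => by
      simpa [ne_of_mem_of_not_mem hk hil] using (hs k hk).ne
    rw [siteProd_cons, ← Matrix.vecMul_vecMul, bra_vecMul_Rsite, Matrix.add_vecMul,
      Matrix.smul_vecMul, Matrix.smul_vecMul, Pi.add_apply, Pi.smul_apply, Pi.smul_apply,
      ih hl hs, bra_vecMul_siteProd_apply_eq_zero β u t s' l hi.ne exchanged]
    simp [passWeight, hi, mul_assoc]

lemma bra_vecMul_siteProd_of_eq (β u : F) (t : Fin N → F) {a : Fin n} {s : Fin N → Fin n}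
    {l : List (Fin N)} (hs : ∀ k ∈ l, s k = a) :
    bra (a, s) ᵥ* siteProd β u t l = bra (F := F) (a, s) := by
  induction l with
  | nil => simp [siteProd]
  | cons i l ih =>
    obtain ⟨hi, hs⟩ := List.forall_mem_cons.1 hs
    subst hi
    rw [siteProd_cons, ← Matrix.vecMul_vecMul, bra_vecMul_Rsite_of_le β u (t i) le_rfl,
      Function.update_eq_self, ih hs]

lemma bra_vecMul_blockOp_of_siteProd {β u : F} {t : Fin N → F} {r c d : Fin n}
    {s s₁ : Fin N → Fin n} {p : Fin N}
    (above : bra (r, s) ᵥ* siteProd β u t ((List.finRange N).filter (p < ·)).reverse =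
      bra (F := F) (d, s₁))
    (hc : s₁ p = c) (hd : d ≤ c) (below : ∀ k < p, s₁ k < c) :
    bra s ᵥ* blockOp n N β u t r c =
      (∏ k ∈ Finset.Iio p, om β u (t k)) • bra (F := F) (Function.update s₁ p d) := by
  funext s'
  have nodup : ((List.finRange N).filter (· < p)).reverse.Nodup :=
    List.nodup_reverse.2 ((List.nodup_finRange N).filter _)
  have sites : ((List.finRange N).filter (· < p)).reverse.toFinset = Finset.Iio p := by
    ext k
    simp
  rw [bra_vecMul_blockOp_apply, Tmono_eq_siteProd_mul_Rsite_mul_siteProd (p := p),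
    ← Matrix.vecMul_vecMul, ← Matrix.vecMul_vecMul, above,
    bra_vecMul_Rsite_of_le β u (t p) (hc ▸ hd), hc,
    bra_vecMul_siteProd_apply_of_lt β u t _ s' nodup, ← sites, List.prod_toFinset _ nodup,
    Pi.smul_apply, smul_eq_mul]
  intro k hk
  have hkp : k < p := by simpa using hk
  simpa [hkp.ne] using below k hkp

/-- The state `w` with all sites from `p` on (counted from `0`) emptied, i.e. set to colour `0`. -/
def clearFrom [NeZero n] (w : Fin N → Fin n) (p : ℕ) : Fin N → Fin n :=
  fun k => if (k : ℕ) < p then w k else 0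

variable [NeZero n]

lemma clearFrom_of_lt (w : Fin N → Fin n) {p : ℕ} {k : Fin N} (h : (k : ℕ) < p) :
    clearFrom w p k = w k :=
  if_pos h

lemma clearFrom_of_le (w : Fin N → Fin n) {p : ℕ} {k : Fin N} (h : p ≤ k) :
    clearFrom w p k = 0 :=
  if_neg h.not_gt

theorem bra_clearFrom_vecMul_blockOp (β u : F) (t : Fin N → F) {w : Fin N → Fin n} {p : Fin N}
    (hw : ∀ k < p, w k < w p) :
    bra (clearFrom w (p + 1)) ᵥ* blockOp n N β u t 0 (w p) =
      (∏ k ∈ Finset.Iio p, om β u (t k)) • bra (F := F) (clearFrom w p) := by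
  have cleared : Function.update (clearFrom w (p + 1)) p 0 = clearFrom w p := by
    funext k
    grind [clearFrom]
  rw [← cleared]
  refine bra_vecMul_blockOp_of_siteProd (bra_vecMul_siteProd_of_eq β u t fun k hk => ?_)
    (clearFrom_of_lt w (Nat.lt_succ_self _)) (Fin.zero_le _) fun k hk => ?_
  · have hpk : p < k := by simpa using hk
    exact clearFrom_of_le w hpk
  · rw [clearFrom_of_lt w (Nat.lt_succ_of_lt hk)]
    exact hw k hk

theorem bra_clearFrom_vecMul_blockOp_of_covBy (β u : F) (t : Fin N → F) {w : Fin N → Fin n}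
    {p p' : Fin N} (hpp' : p ⋖ p') (hw : ∀ k < p, w k < w p) (hw' : w p' < w p) :
    bra (clearFrom w (p' + 1)) ᵥ* blockOp n N β u t 0 (w p) =
      (∏ k ∈ Finset.Iio p, om β u (t k)) •
        bra (F := F) (clearFrom (w ∘ Equiv.swap p p') p') := by
  have hlt : p < p' := hpp'.lt
  have swapped : Function.update (Function.update (clearFrom w (p' + 1)) p' 0) p (w p') =
      clearFrom (w ∘ Equiv.swap p p') p' := by
    funext k
    grind [clearFrom]
  have above : bra (0, clearFrom w (p' + 1)) ᵥ*
      siteProd β u t ((List.finRange N).filter (p < ·)).reverse =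
        bra (F := F) (w p', Function.update (clearFrom w (p' + 1)) p' 0) := by
    rw [filter_lt_finRange_of_covBy hpp', siteProd_reverse_cons, ← Matrix.vecMul_vecMul,
      bra_vecMul_siteProd_of_eq, bra_vecMul_Rsite_of_le β u (t p') (Fin.zero_le _),
      clearFrom_of_lt w (Nat.lt_succ_self _)]
    intro k hk
    have hpk : p' < k := by simpa using hk
    exact clearFrom_of_le w hpk
  rw [← swapped]
  refine bra_vecMul_blockOp_of_siteProd above ?_ hw'.le fun k hk => ?_
  · rw [Function.update_of_ne hlt.ne, clearFrom_of_lt w (Nat.lt_succ_of_lt hlt)]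
  · have hkp' : k < p' := hk.trans hlt
    rw [Function.update_of_ne hkp'.ne, clearFrom_of_lt w (Nat.lt_succ_of_lt hkp')]
    exact hw k hk

end SingleBlock

section Permutations

lemma swap_comp_swap {α : Type*} [DecidableEq α] (a b : α) :
    ⇑(Equiv.swap a b) ∘ Equiv.swap a b = id :=
  congrArg DFunLike.coe (Equiv.swap_swap a b)

lemma swap_lt_swap_of_covBy {α : Type*} [LinearOrder α] {i i' a b : α} (h : i ⋖ i') (hab : a < b)
    (hne : ¬(a = i ∧ b = i')) : Equiv.swap i i' a < Equiv.swap i i' b := by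
  have above : ∀ {z}, i < z ↔ i' ≤ z := h.lt_iff_le_right
  have below : ∀ {z}, z < i' ↔ z ≤ i := h.lt_iff_le_left
  simp only [Equiv.swap_apply_def]
  grind

lemma symm_mul_swap_lt_symm_mul_swap {α : Type*} [LinearOrder α] {π : Equiv.Perm α}
    {i i' j j' : α} (hjj' : j ⋖ j') (hii' : i < i') (hdesc : π j' < π j)
    (hπ : π.symm i < π.symm i') :
    (π * Equiv.swap j j').symm i < (π * Equiv.swap j j').symm i' := by
  have not_both : ¬(π.symm i = j ∧ π.symm i' = j') := by
    rintro ⟨rfl, rfl⟩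
    simp only [Equiv.apply_symm_apply] at hdesc
    exact hdesc.not_gt hii'
  simpa [Equiv.Perm.mul_def] using swap_lt_swap_of_covBy hjj' hπ not_both

lemma swap_apply_lt_swap_apply_of_descent {α : Type*} [LinearOrder α] {π : Equiv.Perm α}
    {i i' j j' : α} (hii' : i ⋖ i') (hjj' : j < j') (hdesc : π j' < π j)
    (hπ : π.symm i < π.symm i') :
    Equiv.swap i i' (π j') < Equiv.swap i i' (π j) := by
  refine swap_lt_swap_of_covBy hii' hdesc ?_
  rintro ⟨rfl, rfl⟩
  simp only [Equiv.symm_apply_apply] at hπ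
  exact hπ.not_gt hjj'

lemma symm_lt_symm_of_permLength_lt {N : ℕ} {π : Equiv.Perm (Fin N)} {i i' : Fin N} (h : i ⋖ i')
    (hlen : permLength π < permLength (Equiv.swap i i' * π)) : π.symm i < π.symm i' := by
  contrapose! hlen with hpos
  refine Finset.card_le_card (Finset.monotone_filter_right _ ?_)
  rintro ⟨a, b⟩ - ⟨hab, hinv⟩
  refine ⟨hab, lt_of_not_ge fun hle => hinv.not_gt ?_⟩
  refine swap_lt_swap_of_covBy h (hle.lt_of_ne (π.injective.ne hab.ne)) ?_
  rintro ⟨rfl, rfl⟩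
  simp only [Equiv.symm_apply_apply] at hpos
  exact hpos.not_gt hab

theorem perm_descent_induction {N : ℕ} {P : Equiv.Perm (Fin N) → Prop} (one : P 1)
    (descent : ∀ π j j', j ⋖ j' → π j' < π j → P (π * Equiv.swap j j') → P π)
    (π : Equiv.Perm (Fin N)) : P π := by
  induction π using
    (InvImage.wf (fun π : Equiv.Perm (Fin N) => toLex ⇑π) wellFounded_lt).induction with
  | _ π ih =>
  by_cases h : ∃ j j', j ⋖ j' ∧ π j' < π j
  · obtain ⟨j, j', hjj', hlt⟩ := h
    exact descent π j j' hjj' hlt (ih _ (Pi.lex_desc hjj'.le hlt))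
  · push Not at h
    rwa [(Equiv.Perm.monotone_iff π).1 ((monotone_iff_forall_covBy π).2 h)]

end Permutations

section DividedDifference

variable [Field F]

/-- The relation `⟨w'| A(u, v) = ∂^β (⟨w| A(u, v))`, the `β`-divided difference being taken in the
variables `(u, v)`, with the denominator `u - v` cleared. -/
def BraDividedDifference {ι : Type*} [Fintype ι] [DecidableEq ι] (β : F) (A : F → F → Matrix ι ι F)
    (w' w : ι) : Prop :=
  ∀ u v, (u - v) • (bra w' ᵥ* A u v) =
    (1 + β * v) • (bra w ᵥ* A u v) - (1 + β * u) • (bra w ᵥ* A v u)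

variable {n N : ℕ} {β o : F} {j j' : Fin N}

lemma smul_bra_comp_swap_vecMul {X X' : Matrix (Fin N → Fin n) (Fin N → Fin n) F}
    (hX : SemiconjBy (siteExchange β o j j') X' X) {w : Fin N → Fin n} (hw : w j < w j') :
    o • (bra (w ∘ Equiv.swap j j') ᵥ* X') =
      bra w ᵥ* X ᵥ* siteExchange β o j j' - (1 + β * o) • (bra w ᵥ* X') := by
  rw [Matrix.vecMul_vecMul, ← hX.eq, ← Matrix.vecMul_vecMul, bra_vecMul_siteExchange,
    Matrix.add_vecMul, Matrix.smul_vecMul, Matrix.smul_vecMul]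
  simp [passWeight, hw]

theorem BraDividedDifference.comp_swap (ho : o ≠ 0)
    {A A' : F → F → Matrix (Fin N → Fin n) (Fin N → Fin n) F}
    (hA : ∀ u v, SemiconjBy (siteExchange β o j j') (A' u v) (A u v)) {w w' : Fin N → Fin n}
    (hw : w j < w j') (hw' : w' j < w' j') (h : BraDividedDifference β A w' w)
    (h' : BraDividedDifference β A' w' w) :
    BraDividedDifference β A' (w' ∘ Equiv.swap j j') (w ∘ Equiv.swap j j') := by
  intro u v
  have exchanged := congrArg (· ᵥ* siteExchange β o j j') (h u v)
  simp only [Matrix.sub_vecMul, Matrix.smul_vecMul] at exchanged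
  refine smul_right_injective _ ho ?_
  simp only [smul_sub, smul_comm o, smul_bra_comp_swap_vecMul (hA _ _) hw,
    smul_bra_comp_swap_vecMul (hA _ _) hw', exchanged]
  rw [smul_comm _ (1 + β * o), h' u v]
  module

end DividedDifference

section DescendingProduct

variable [Field F] {M : ℕ}

lemma castSucc_covBy_succ {m : ℕ} (i : Fin m) : i.castSucc ⋖ i.succ := by
  simp [Fin.covBy_iff]

/-- The operator `B_{N-1}(σ_1) ⋯ B_{i+1}(σ_{N-i-1}) B_i(u) B_{i-1}(v)`, that is, `fullDesc` with the
parameters of its last two factors made explicit. -/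
def descProduct (β : F) (t : Fin (M + 2) → F) (ii : Fin (M + 1)) (σ : Fin (M + 2) → F) (u v : F) :
    Matrix (Fin (M + 2) → Fin (M + 2)) (Fin (M + 2) → Fin (M + 2)) F :=
  topString M β t σ (M - (ii : ℕ)) (by omega) *
    blockOp (M + 2) (M + 2) β u t 0 ii.succ * blockOp (M + 2) (M + 2) β v t 0 ii.castSucc

lemma topString_congr (β : F) (t : Fin (M + 2) → F) {σ σ' : Fin (M + 2) → F} {c : ℕ}
    (hc : c ≤ M + 1) (h : ∀ k : Fin (M + 2), (k : ℕ) < c → σ k = σ' k) :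
    topString M β t σ c hc = topString M β t σ' c hc := by
  unfold topString
  congr! 4 with a
  exact h _ a.isLt

lemma fullDesc_eq_descProduct (β : F) (t : Fin (M + 2) → F) (ii : Fin (M + 1))
    (σ : Fin (M + 2) → F) {p p' : Fin (M + 2)} (hp : (p : ℕ) = M - ii)
    (hp' : (p' : ℕ) = M + 1 - ii) :
    fullDesc M β t ii σ = descProduct β t ii σ (σ p) (σ p') := by
  simp only [fullDesc, descProduct, ← hp, ← hp', Fin.eta]

lemma fullDesc_comp_swap_eq_descProduct (β : F) (t : Fin (M + 2) → F) (ii : Fin (M + 1))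
    (σ : Fin (M + 2) → F) {p p' : Fin (M + 2)} (hp : (p : ℕ) = M - ii)
    (hp' : (p' : ℕ) = M + 1 - ii) :
    fullDesc M β t ii (fun k => σ (Equiv.swap p p' k)) = descProduct β t ii σ (σ p') (σ p) := by
  rw [fullDesc_eq_descProduct β t ii _ hp hp', Equiv.swap_apply_left, Equiv.swap_apply_right,
    descProduct, descProduct,
    topString_congr β t _ fun k hk => congrArg σ (Equiv.swap_apply_of_ne_of_ne ?_ ?_)] <;>
    rw [ne_eq, Fin.ext_iff] <;> omega

lemma semiconjBy_siteExchange_descProduct {β : F} {t : Fin (M + 2) → F}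
    (ht : ∀ k, 1 + β * t k ≠ 0) {j j' : Fin (M + 2)} (hjj' : j ⋖ j') (ii : Fin (M + 1))
    (σ : Fin (M + 2) → F) (u v : F) :
    SemiconjBy (siteExchange β (om β (t j') (t j)) j j')
      (descProduct β (t ∘ Equiv.swap j j') ii σ u v) (descProduct β t ii σ u v) := by
  have block (x : F) := semiconjBy_siteExchange_blockOp (n := M + 2) x ht hjj' 0
  have top : SemiconjBy (siteExchange β (om β (t j') (t j)) j j')
      (topString M β (t ∘ Equiv.swap j j') σ (M - ii) (by omega))
      (topString M β t σ (M - ii) (by omega)) := by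
    simp only [topString, List.ofFn_eq_map]
    exact semiconjBy_list_map_prod _ fun _ _ => block _ _
  exact (top.mul_right (block u _)).mul_right (block v _)

lemma topString_succ (β : F) (t σ : Fin (M + 2) → F) {c : ℕ} (hc : c + 1 ≤ M + 1) :
    topString M β t σ (c + 1) hc =
      topString M β t σ c (by omega) *
        blockOp (M + 2) (M + 2) β (σ ⟨c, by omega⟩) t 0 ⟨M + 1 - c, by omega⟩ := by
  rw [topString, List.ofFn_succ']
  simp [topString]

/-- The amplitude `∏_{a < c} ∏_{k < N-1-a} (σ_{a+1} ⊖ t_{k+1})` picked up by a state whose last `c`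
sites are fixed when `topString` empties these sites one by one. -/
def topWeight (β : F) (t σ : Fin (M + 2) → F) (c : ℕ) (hc : c ≤ M + 1) : F :=
  ∏ a : Fin c, ∏ k ∈ Finset.Iio (⟨M + 1 - a, by omega⟩ : Fin (M + 2)),
    om β (σ ⟨a, by omega⟩) (t k)

theorem bra_vecMul_topString (β : F) (t σ : Fin (M + 2) → F) {w : Fin (M + 2) → Fin (M + 2)}
    (hw : Function.Injective w) {c : ℕ} (hc : c ≤ M + 1)
    (hfix : ∀ p : Fin (M + 2), M + 2 - c ≤ p → w p = p) :
    bra w ᵥ* topString M β t σ c hc =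
      topWeight β t σ c hc • bra (F := F) (clearFrom w (M + 2 - c)) := by
  induction c with
  | zero =>
    have full : clearFrom w (M + 2) = w := funext fun k => clearFrom_of_lt w k.isLt
    simp [topString, topWeight, full]
  | succ c ih =>
    obtain ⟨p, hp⟩ : ∃ p : Fin (M + 2), p = ⟨M + 1 - c, by omega⟩ := ⟨_, rfl⟩
    have hpval : (p : ℕ) = M + 1 - c := congrArg Fin.val hp
    have wp : w p = p := hfix p (by omega)
    have hlt : ∀ k < p, w k < w p := fun k hk => by
      by_contra! hle
      have fixed : w (w k) = w k := hfix _ (by omega)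
      have := hw fixed
      omega
    have step := bra_clearFrom_vecMul_blockOp β (σ ⟨c, by omega⟩) t hlt
    rw [wp, hpval, show M + 1 - c + 1 = M + 2 - c by omega] at step
    rw [topString_succ, ← Matrix.vecMul_vecMul, ih (by omega) fun q hq => hfix q (by omega),
      Matrix.smul_vecMul, ← hp, step, smul_smul, topWeight, topWeight, Fin.prod_univ_castSucc,
      show M + 2 - (c + 1) = M + 1 - c by omega]
    simp [hp]

lemma bra_vecMul_descProduct {β u : F} {t : Fin (M + 2) → F} {ii : Fin (M + 1)}
    (σ : Fin (M + 2) → F) (v : F) {w : Fin (M + 2) → Fin (M + 2)} (hw : Function.Injective w)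
    (hfix : ∀ p, ii.succ < p → w p = p) {z : F}
    (hz : bra (clearFrom w (ii.succ + 1)) ᵥ* blockOp (M + 2) (M + 2) β u t 0 ii.succ =
      z • bra (F := F) (clearFrom id ii.succ)) :
    bra w ᵥ* descProduct β t ii σ u v =
      (topWeight β t σ (M - ii) (by omega) * z * ∏ k ∈ Finset.Iio ii.castSucc, om β v (t k)) •
        bra (F := F) (clearFrom id ii) := by
  have sites : M + 2 - (M - (ii : ℕ)) = ii.succ + 1 := by
    rw [Fin.val_succ]
    omega
  have top := bra_vecMul_topString β t σ hw (c := M - ii) (by omega)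
    fun p hp => hfix p (Fin.lt_def.2 (by omega))
  have last : bra (clearFrom id ii.succ) ᵥ* blockOp (M + 2) (M + 2) β v t 0 ii.castSucc = _ :=
    bra_clearFrom_vecMul_blockOp β v t (w := id) (p := ii.castSucc) fun k hk => hk
  rw [descProduct, ← Matrix.vecMul_vecMul, ← Matrix.vecMul_vecMul, top, sites,
    Matrix.smul_vecMul, hz, smul_smul, Matrix.smul_vecMul, last, smul_smul, Fin.val_castSucc]

lemma bra_id_vecMul_descProduct (β : F) (t : Fin (M + 2) → F) (ii : Fin (M + 1))
    (σ : Fin (M + 2) → F) (u v : F) :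
    bra id ᵥ* descProduct β t ii σ u v =
      (topWeight β t σ (M - ii) (by omega) *
          (om β u (t ii.castSucc) * ∏ k ∈ Finset.Iio ii.castSucc, om β u (t k)) *
        ∏ k ∈ Finset.Iio ii.castSucc, om β v (t k)) • bra (F := F) (clearFrom id ii) := by
  have sites : insert ii.castSucc (Finset.Iio ii.castSucc) = Finset.Iio ii.succ := by
    ext k
    simp [(castSucc_covBy_succ ii).lt_iff_le_left, le_iff_eq_or_lt]
  rw [← Finset.prod_insert (f := fun k => om β u (t k)) Finset.notMem_Iio_self, sites]
  exact bra_vecMul_descProduct σ v Function.injective_id (fun p _ => rfl)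
    (bra_clearFrom_vecMul_blockOp β u t (w := id) fun k hk => hk)

lemma bra_swap_vecMul_descProduct (β : F) (t : Fin (M + 2) → F) (ii : Fin (M + 1))
    (σ : Fin (M + 2) → F) (u v : F) :
    bra ⇑(Equiv.swap ii.castSucc ii.succ) ᵥ* descProduct β t ii σ u v =
      (topWeight β t σ (M - ii) (by omega) * (∏ k ∈ Finset.Iio ii.castSucc, om β u (t k)) *
        ∏ k ∈ Finset.Iio ii.castSucc, om β v (t k)) • bra (F := F) (clearFrom id ii) := by
  have hlt : ii.castSucc < ii.succ := ii.castSucc_lt_succ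
  have block := bra_clearFrom_vecMul_blockOp_of_covBy β u t
    (w := Equiv.swap ii.castSucc ii.succ) (castSucc_covBy_succ ii)
    (fun k hk => by
      rw [Equiv.swap_apply_left, Equiv.swap_apply_of_ne_of_ne hk.ne (hk.trans hlt).ne]
      exact hk.trans hlt)
    (by rwa [Equiv.swap_apply_left, Equiv.swap_apply_right])
  rw [Equiv.swap_apply_left, swap_comp_swap] at block
  exact bra_vecMul_descProduct σ v (Equiv.injective _)
    (fun p hp => Equiv.swap_apply_of_ne_of_ne (hlt.trans hp).ne' hp.ne') block

theorem braDividedDifference_descProduct_one {β : F} {t : Fin (M + 2) → F} {ii : Fin (M + 1)}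
    (ht : 1 + β * t ii.castSucc ≠ 0) (σ : Fin (M + 2) → F) :
    BraDividedDifference β (descProduct β t ii σ) (Equiv.swap ii.castSucc ii.succ) id := by
  intro u v
  have divided : u - v = (1 + β * v) * om β u (t ii.castSucc) -
      (1 + β * u) * om β v (t ii.castSucc) := by
    unfold om
    field_simp
    ring
  rw [bra_swap_vecMul_descProduct, bra_id_vecMul_descProduct, bra_id_vecMul_descProduct, divided]
  module

theorem braDividedDifference_descProduct {β : F} {ii : Fin (M + 1)} (σ : Fin (M + 2) → F)
    {π : Equiv.Perm (Fin (M + 2))} {t : Fin (M + 2) → F} (ht : ∀ k, 1 + β * t k ≠ 0)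
    (hinj : Function.Injective t) (hπ : π.symm ii.castSucc < π.symm ii.succ) :
    BraDividedDifference β (descProduct β t ii σ) (Equiv.swap ii.castSucc ii.succ ∘ π) π := by
  induction π using perm_descent_induction generalizing t with
  | one => exact braDividedDifference_descProduct_one (ht _) σ
  | descent π j j' hjj' hdesc ih =>
    have cov := castSucc_covBy_succ ii
    have hpos := symm_mul_swap_lt_symm_mul_swap hjj' cov.lt hdesc hπ
    have ht' : ∀ k, 1 + β * (t ∘ Equiv.swap j j') k ≠ 0 := fun k => ht _
    have hinj' : Function.Injective (t ∘ Equiv.swap j j') := hinj.comp (Equiv.injective _)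
    have exchange := semiconjBy_siteExchange_descProduct ht' hjj' ii σ
    rw [Function.comp_assoc, swap_comp_swap, Function.comp_id] at exchange
    have hom : om β ((t ∘ Equiv.swap j j') j') ((t ∘ Equiv.swap j j') j) ≠ 0 :=
      om_ne_zero (hinj'.ne hjj'.ne') (ht' j)
    have step := (ih ht' hinj' hpos).comp_swap hom exchange (by simpa using hdesc)
      (by simpa using swap_apply_lt_swap_apply_of_descent cov hjj'.lt hdesc hπ)
      (ih ht hinj hpos)
    simpa only [Equiv.Perm.coe_mul, Function.comp_assoc, swap_comp_swap, Function.comp_id]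
      using step

end DescendingProduct

lemma one_add_mul_ne_zero_of_algebraicIndependent {ι R A : Type*} [CommRing R] [Nontrivial R]
    [CommRing A] [Algebra R A] {x : ι → A} (hx : AlgebraicIndependent R x) (a b : ι) :
    1 + x a * x b ≠ 0 := fun h => by
  have poly : (1 + MvPolynomial.X a * MvPolynomial.X b : MvPolynomial ι R) = 0 :=
    (injective_iff_map_eq_zero _).1 hx _ (by simpa using h)
  simpa using congrArg (MvPolynomial.eval 0) poly

theorem bra_divided_difference_general [Field F] {M : ℕ} {β : F} {σ t : Fin (M + 2) → F}
    (ht : ∀ k, 1 + β * t k ≠ 0) (htinj : Function.Injective t) {ii : Fin (M + 1)}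
    {p p' : Fin (M + 2)} (hp : (p : ℕ) = M - ii) (hp' : (p' : ℕ) = M + 1 - ii) (hσ : σ p ≠ σ p')
    {π : Equiv.Perm (Fin (M + 2))}
    (hlen : permLength π < permLength (Equiv.swap ii.castSucc ii.succ * π))
    (s : Fin (M + 2) → Fin (M + 2)) :
    (ket (M + 2) (M + 2) (fun j => (Equiv.swap ii.castSucc ii.succ * π) j) ᵥ*
        fullDesc M β t ii σ) s =
      ((1 + β * σ p') * (ket (M + 2) (M + 2) (fun j => π j) ᵥ* fullDesc M β t ii σ) s -
          (1 + β * σ p) * (ket (M + 2) (M + 2) (fun j => π j) ᵥ*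
            fullDesc M β t ii fun j => σ (Equiv.swap p p' j)) s) /
        (σ p - σ p') := by
  have positions := symm_lt_symm_of_permLength_lt (castSucc_covBy_succ ii) hlen
  have cleared := congrFun (braDividedDifference_descProduct σ ht htinj positions (σ p) (σ p')) s
  rw [eq_div_iff (sub_ne_zero.2 hσ), mul_comm, fullDesc_comp_swap_eq_descProduct β t ii σ hp hp',
    fullDesc_eq_descProduct β t ii σ hp hp']
  simp only [ket_eq_bra]
  exact cleared

/-- **Lemma `l4`**: if `ℓ(s_i π) > ℓ(π)` then
`⟨s_iπ| B_{N-1}(σ_1) ⋯ B_i(σ_{N-i}) B_{i-1}(σ_{N-i+1})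
 = ∂^β_{N-i} (⟨π| B_{N-1}(σ_1) ⋯ B_i(σ_{N-i}) B_{i-1}(σ_{N-i+1}))`,
the β-divided difference acting componentwise in the variables `σ_{N-i}, σ_{N-i+1}`. -/
theorem bra_divided_difference [Field F] [CharZero F] (M : ℕ) (β : F)
    (σ t : Fin (M + 2) → F)
    (hind : AlgebraicIndependent ℚ
      (Sum.elim (fun _ : Unit => β) (Sum.elim σ t)))
    (ii : Fin (M + 1)) (π : Equiv.Perm (Fin (M + 2)))
    (hlen : permLength π < permLength (Equiv.swap ii.castSucc ii.succ * π)) :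
    ∀ s : Fin (M + 2) → Fin (M + 2),
      Matrix.vecMul (ket (M + 2) (M + 2) fun j => (Equiv.swap ii.castSucc ii.succ * π) j)
          (fullDesc M β t ii σ) s =
        ((1 + β * σ ⟨M + 1 - (ii : ℕ), by omega⟩) *
              Matrix.vecMul (ket (M + 2) (M + 2) fun j => π j) (fullDesc M β t ii σ) s -
            (1 + β * σ ⟨M - (ii : ℕ), by omega⟩) *
              Matrix.vecMul (ket (M + 2) (M + 2) fun j => π j)
                (fullDesc M β t ii fun j =>
                  σ (Equiv.swap (⟨M - (ii : ℕ), by omega⟩ : Fin (M + 2))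
                      ⟨M + 1 - (ii : ℕ), by omega⟩ j)) s) /
          (σ ⟨M - (ii : ℕ), by omega⟩ - σ ⟨M + 1 - (ii : ℕ), by omega⟩) := by
  exact bra_divided_difference_general
    (fun k => one_add_mul_ne_zero_of_algebraicIndependent hind (Sum.inl ()) (Sum.inr (Sum.inr k)))
    (hind.injective.comp (Sum.inr_injective.comp Sum.inr_injective)) rfl rfl
    ((hind.injective.comp (Sum.inr_injective.comp Sum.inl_injective)).ne
      (Fin.ne_of_val_ne (by dsimp only; omega))) hlen
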